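/- Let U = α + η V + ω Q where V = |X₁| componentwise with X₁ ~ N_n(0,Ω), and Q ~ N_n(0,Ω), with X₁ and Q independent. Then the density of U is f_U(u) = 2 Σ_{l=1}^{2^{n-1}} φ_n(u - α; A_l) Φ_n(c_l; 0, B_l), where A_l = ω²Ω + η²Ω_l, c_l = η Ω_l A_l^{-1}(u - α), B_l = Ω_l - η² Ω_l A_l^{-1} Ω_l, the sum is over representatives l of the 2^{n-1} sign classes {l,-l}, and Ω_l = D(l)ΩD(l). -/

import Mathlib

open Real MeasureTheory Matrix

/-- Multivariate Gaussian density with mean `m` and covariance `S`. -/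
noncomputable def gaussDensity {n : ℕ} (m : Fin n → ℝ) (S : Matrix (Fin n) (Fin n) ℝ)
    (x : Fin n → ℝ) : ℝ :=
  (2 * π) ^ (-(n:ℝ)/2) * S.det ^ (-(1:ℝ)/2) *
    Real.exp (-((x - m) ⬝ᵥ S⁻¹.mulVec (x - m)) / 2)

/-- Multivariate Gaussian orthant cdf `Φ_n(c; 0, S) = P(Z ≤ c)` for `Z ~ N_n(0,S)`. -/
noncomputable def gaussCdf {n : ℕ} (c : Fin n → ℝ) (S : Matrix (Fin n) (Fin n) ℝ) : ℝ :=
  ((volume.withDensity fun x => ENNReal.ofReal (gaussDensity 0 S x))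
    {x : Fin n → ℝ | ∀ i, x i ≤ c i}).toReal

/-- Sign vector associated to `b : Fin n → Bool`. -/
noncomputable def sgn {n : ℕ} (b : Fin n → Bool) (i : Fin n) : ℝ := if b i then 1 else -1

/-- Signed correlation matrix `Ω_l = D(l) Ω D(l)`. -/
noncomputable def sgnMat {n : ℕ} (b : Fin n → Bool) (Ω : Matrix (Fin n) (Fin n) ℝ) :
    Matrix (Fin n) (Fin n) ℝ :=
  Matrix.of fun i j => sgn b i * sgn b j * Ω i j

section Algebra

variable {n : ℕ}

lemma sgn_mul_self (b : Fin n → Bool) (i : Fin n) : sgn b i * sgn b i = 1 := by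
  unfold sgn; split <;> simp

lemma sgn_not (b : Fin n → Bool) (i : Fin n) : sgn (fun j => !b j) i = -sgn b i := by
  unfold sgn; cases h : b i <;> simp [h]

lemma sgnMat_not (b : Fin n → Bool) (Ω : Matrix (Fin n) (Fin n) ℝ) :
    sgnMat (fun j => !b j) Ω = sgnMat b Ω := by
  ext i j
  simp [sgnMat, sgn_not]

lemma diagonal_sgn_mul_self (b : Fin n → Bool) :
    diagonal (sgn b) * diagonal (sgn b) = (1 : Matrix (Fin n) (Fin n) ℝ) := by
  rw [diagonal_mul_diagonal, ← diagonal_one]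
  congr 1
  exact funext (sgn_mul_self b)

lemma sgnMat_eq_diagonal_mul (b : Fin n → Bool) (Ω : Matrix (Fin n) (Fin n) ℝ) :
    sgnMat b Ω = diagonal (sgn b) * Ω * diagonal (sgn b) := by
  ext i j
  simp [sgnMat, mul_right_comm]

lemma det_sgnMat (b : Fin n → Bool) (Ω : Matrix (Fin n) (Fin n) ℝ) :
    (sgnMat b Ω).det = Ω.det := by
  have h := congrArg det (diagonal_sgn_mul_self b)
  rw [det_mul, det_one] at h
  rw [sgnMat_eq_diagonal_mul, det_mul, det_mul, mul_right_comm, h, one_mul]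

lemma sgnMat_inv (b : Fin n → Bool) (Ω : Matrix (Fin n) (Fin n) ℝ) :
    (sgnMat b Ω)⁻¹ = sgnMat b Ω⁻¹ := by
  have h : (diagonal (sgn b))⁻¹ = diagonal (sgn b) := inv_eq_left_inv (diagonal_sgn_mul_self b)
  simp only [sgnMat_eq_diagonal_mul, Matrix.mul_inv_rev, h, Matrix.mul_assoc]

lemma sgnMat_posDef (b : Fin n → Bool) {Ω : Matrix (Fin n) (Fin n) ℝ} (hΩ : Ω.PosDef) :
    (sgnMat b Ω).PosDef := by
  have hinj : Function.Injective (diagonal (sgn b)).mulVec := by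
    intro x y h
    have := congrArg (diagonal (sgn b)).mulVec h
    simpa [mulVec_mulVec, -diagonal_mul_diagonal, diagonal_sgn_mul_self] using this
  have := hΩ.conjTranspose_mul_mul_same hinj
  rwa [diagonal_conjTranspose, star_trivial, ← sgnMat_eq_diagonal_mul] at this

lemma gaussDensity_sgn_mul (b : Fin n → Bool) (Ω : Matrix (Fin n) (Fin n) ℝ) (v : Fin n → ℝ) :
    gaussDensity 0 Ω (fun i => sgn b i * v i) = gaussDensity 0 (sgnMat b Ω) v := by
  unfold gaussDensity
  rw [det_sgnMat, sgnMat_inv]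
  simp only [sub_zero]
  congr 4
  simp only [dotProduct, mulVec, sgnMat, of_apply, Finset.mul_sum]
  refine Finset.sum_congr rfl fun i _ => Finset.sum_congr rfl fun j _ => by ring

lemma gaussDensity_nonneg {S : Matrix (Fin n) (Fin n) ℝ} (hS : S.PosDef) (m x : Fin n → ℝ) :
    0 ≤ gaussDensity m S x := by
  have := hS.det_pos
  unfold gaussDensity
  positivity

lemma gaussDensity_zero_sub_comm (S : Matrix (Fin n) (Fin n) ℝ) (x y : Fin n → ℝ) :
    gaussDensity 0 S (x - y) = gaussDensity 0 S (y - x) := by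
  unfold gaussDensity
  rw [← neg_sub y x]
  simp only [sub_zero, mulVec_neg, neg_dotProduct, dotProduct_neg, neg_neg]

lemma gaussDensity_smul {ω : ℝ} (hω : 0 < ω) {Ω : Matrix (Fin n) (Fin n) ℝ} (hΩ : Ω.PosDef)
    (y : Fin n → ℝ) :
    gaussDensity 0 (ω ^ 2 • Ω) (ω • y) = (ω ^ n)⁻¹ * gaussDensity 0 Ω y := by
  have hdet := hΩ.det_pos
  have hu : IsUnit Ω.det := hdet.ne'.isUnit
  have hinv : (ω ^ 2 • Ω)⁻¹ = (ω ^ 2)⁻¹ • Ω⁻¹ := by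
    refine inv_eq_left_inv ?_
    rw [smul_mul_smul_comm, nonsing_inv_mul _ hu, inv_mul_cancel₀ (by positivity), one_smul]
  have hpow : ((ω ^ 2) ^ n : ℝ) ^ (-(1 : ℝ) / 2) = (ω ^ n)⁻¹ := by
    rw [← pow_mul, mul_comm 2 n, pow_mul, ← Real.rpow_natCast (ω ^ n) 2,
      ← Real.rpow_mul (by positivity)]
    norm_num
    rw [Real.rpow_neg_one]
  unfold gaussDensity
  rw [hinv, det_smul, Fintype.card_fin, Real.mul_rpow (by positivity) hdet.le, hpow]
  have : (ω • y - 0) ⬝ᵥ ((ω ^ 2)⁻¹ • Ω⁻¹) *ᵥ (ω • y - 0) = (y - 0) ⬝ᵥ Ω⁻¹ *ᵥ (y - 0) := by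
    simp only [sub_zero, smul_mulVec, mulVec_smul, dotProduct_smul, smul_dotProduct, smul_eq_mul]
    field_simp
  rw [this]
  ring

/-- The precision matrix `R⁻¹ + η² P⁻¹` inverts the conditional covariance of `v` given `u`. -/
lemma condCov_eq_inv (P R : Matrix (Fin n) (Fin n) ℝ) (hP : P.PosDef) (hR : R.PosDef) (η : ℝ) :
    (R⁻¹ + η ^ 2 • P⁻¹).PosDef ∧ P + η ^ 2 • R = P * (R⁻¹ + η ^ 2 • P⁻¹) * R ∧
    R * (P + η ^ 2 • R)⁻¹ = (R⁻¹ + η ^ 2 • P⁻¹)⁻¹ * P⁻¹ ∧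
    R - η ^ 2 • (R * (P + η ^ 2 • R)⁻¹ * R) = (R⁻¹ + η ^ 2 • P⁻¹)⁻¹ ∧
    (P + η ^ 2 • R)⁻¹ = P⁻¹ - η ^ 2 • (P⁻¹ * (R⁻¹ + η ^ 2 • P⁻¹)⁻¹ * P⁻¹) := by
  have uP : IsUnit P.det := hP.det_pos.ne'.isUnit
  have uR : IsUnit R.det := hR.det_pos.ne'.isUnit
  have hM : (R⁻¹ + η ^ 2 • P⁻¹).PosDef :=
    hR.inv.add_posSemidef (hP.inv.posSemidef.smul (sq_nonneg η))
  have uM : IsUnit (R⁻¹ + η ^ 2 • P⁻¹).det := hM.det_pos.ne'.isUnit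
  have hA : P + η ^ 2 • R = P * (R⁻¹ + η ^ 2 • P⁻¹) * R := by
    rw [Matrix.mul_add, Matrix.add_mul, Matrix.mul_assoc, nonsing_inv_mul _ uR, Matrix.mul_one,
      Matrix.mul_smul, mul_nonsing_inv _ uP, Matrix.smul_mul, Matrix.one_mul]
  have hRM : R⁻¹ * (R⁻¹ + η ^ 2 • P⁻¹)⁻¹ = 1 - η ^ 2 • (P⁻¹ * (R⁻¹ + η ^ 2 • P⁻¹)⁻¹) := by
    have h := mul_nonsing_inv _ uM
    conv_lhs at h => rw [Matrix.add_mul]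
    rw [Matrix.smul_mul] at h
    exact eq_sub_of_add_eq h
  have hMR : (R⁻¹ + η ^ 2 • P⁻¹)⁻¹ * R⁻¹ = 1 - η ^ 2 • ((R⁻¹ + η ^ 2 • P⁻¹)⁻¹ * P⁻¹) := by
    have h := nonsing_inv_mul _ uM
    conv_lhs at h => rw [Matrix.mul_add]
    rw [Matrix.mul_smul] at h
    exact eq_sub_of_add_eq h
  have hK : R * (P + η ^ 2 • R)⁻¹ = (R⁻¹ + η ^ 2 • P⁻¹)⁻¹ * P⁻¹ := by
    rw [hA, Matrix.mul_inv_rev, Matrix.mul_inv_rev, ← Matrix.mul_assoc, mul_nonsing_inv _ uR, Matrix.one_mul]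
  refine ⟨hM, hA, hK, ?_, ?_⟩
  · have : (R⁻¹ + η ^ 2 • P⁻¹)⁻¹ = (R⁻¹ + η ^ 2 • P⁻¹)⁻¹ * R⁻¹ * R := by
      rw [Matrix.mul_assoc, nonsing_inv_mul _ uR, Matrix.mul_one]
    rw [hK]
    conv_rhs => rw [this, hMR]
    rw [Matrix.sub_mul, Matrix.one_mul, Matrix.smul_mul]
  · rw [hA, Matrix.mul_inv_rev, Matrix.mul_inv_rev, ← Matrix.mul_assoc, hRM, Matrix.sub_mul, Matrix.one_mul,
      Matrix.smul_mul]

/-- Factorization of a product of Gaussian densities into marginal times conditional. -/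
lemma gaussDensity_mul_gaussDensity (P R : Matrix (Fin n) (Fin n) ℝ) (hP : P.PosDef)
    (hR : R.PosDef) (η : ℝ) (w v : Fin n → ℝ) :
    gaussDensity 0 P (w - η • v) * gaussDensity 0 R v =
      gaussDensity 0 (P + η ^ 2 • R) w *
        gaussDensity 0 (R - η ^ 2 • (R * (P + η ^ 2 • R)⁻¹ * R))
          (v - η • (R * (P + η ^ 2 • R)⁻¹).mulVec w) := by
  obtain ⟨hM, hA, hK, hB, hA'⟩ := condCov_eq_inv P R hP hR η
  have hMs : (R⁻¹ + η ^ 2 • P⁻¹)ᵀ = R⁻¹ + η ^ 2 • P⁻¹ := by simpa using hM.isHermitian.eq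
  have hPs : (P⁻¹)ᵀ = P⁻¹ := by simpa using hP.inv.isHermitian.eq
  have hdet : (P + η ^ 2 • R).det * ((R⁻¹ + η ^ 2 • P⁻¹)⁻¹).det = P.det * R.det := by
    rw [hA, det_mul, det_mul, det_nonsing_inv, Ring.inverse_eq_inv']
    have := hM.det_pos.ne'
    field_simp
  have hApos : (P + η ^ 2 • R).PosDef := hP.add_posSemidef (hR.posSemidef.smul (sq_nonneg η))
  have hdet' : (P + η ^ 2 • R).det ^ (-(1 : ℝ) / 2) *
      ((R⁻¹ + η ^ 2 • P⁻¹)⁻¹).det ^ (-(1 : ℝ) / 2) =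
      P.det ^ (-(1 : ℝ) / 2) * R.det ^ (-(1 : ℝ) / 2) := by
    rw [← Real.mul_rpow hApos.det_pos.le hM.inv.det_pos.le, hdet,
      Real.mul_rpow hP.det_pos.le hR.det_pos.le]
  rw [hB, hK]
  unfold gaussDensity
  rw [nonsing_inv_nonsing_inv _ hM.det_pos.ne'.isUnit, hA']
  set M := R⁻¹ + η ^ 2 • P⁻¹ with hMdef
  have hquad : (w - η • v) ⬝ᵥ P⁻¹ *ᵥ (w - η • v) + v ⬝ᵥ R⁻¹ *ᵥ v =
      w ⬝ᵥ (P⁻¹ - η ^ 2 • (P⁻¹ * M⁻¹ * P⁻¹)) *ᵥ w +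
      (v - η • (M⁻¹ * P⁻¹) *ᵥ w) ⬝ᵥ M *ᵥ (v - η • (M⁻¹ * P⁻¹) *ᵥ w) := by
    have hMc : M *ᵥ ((M⁻¹ * P⁻¹) *ᵥ w) = P⁻¹ *ᵥ w := by
      rw [mulVec_mulVec, ← Matrix.mul_assoc, mul_nonsing_inv _ hM.det_pos.ne'.isUnit,
        Matrix.one_mul]
    have hsymM : ∀ x y, x ⬝ᵥ M *ᵥ y = y ⬝ᵥ M *ᵥ x := fun x y => by
      rw [dotProduct_mulVec, ← mulVec_transpose, hMs, dotProduct_comm]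
    have hsymP : ∀ x y, x ⬝ᵥ P⁻¹ *ᵥ y = y ⬝ᵥ P⁻¹ *ᵥ x := fun x y => by
      rw [dotProduct_mulVec, ← mulVec_transpose, hPs, dotProduct_comm]
    have hvMv : v ⬝ᵥ M *ᵥ v = v ⬝ᵥ R⁻¹ *ᵥ v + η ^ 2 * (v ⬝ᵥ P⁻¹ *ᵥ v) := by
      rw [hMdef, add_mulVec, smul_mulVec, dotProduct_add, dotProduct_smul, smul_eq_mul]
    have hwAw : w ⬝ᵥ (P⁻¹ - η ^ 2 • (P⁻¹ * M⁻¹ * P⁻¹)) *ᵥ w =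
        w ⬝ᵥ P⁻¹ *ᵥ w - η ^ 2 * (((M⁻¹ * P⁻¹) *ᵥ w) ⬝ᵥ P⁻¹ *ᵥ w) := by
      rw [sub_mulVec, smul_mulVec, dotProduct_sub, dotProduct_smul, smul_eq_mul, Matrix.mul_assoc,
        ← mulVec_mulVec, hsymP w ((M⁻¹ * P⁻¹) *ᵥ w)]
    rw [hwAw]
    simp only [mulVec_sub, mulVec_smul, dotProduct_sub, sub_dotProduct, dotProduct_smul,
      smul_dotProduct, smul_eq_mul, hMc, hvMv, hsymM _ v, hsymP v w]
    ring
  simp only [sub_zero]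
  have hexp : rexp (-((w - η • v) ⬝ᵥ P⁻¹ *ᵥ (w - η • v)) / 2) * rexp (-(v ⬝ᵥ R⁻¹ *ᵥ v) / 2) =
      rexp (-(w ⬝ᵥ (P⁻¹ - η ^ 2 • (P⁻¹ * M⁻¹ * P⁻¹)) *ᵥ w) / 2) *
      rexp (-((v - η • (M⁻¹ * P⁻¹) *ᵥ w) ⬝ᵥ M *ᵥ (v - η • (M⁻¹ * P⁻¹) *ᵥ w)) / 2) := by
    rw [← Real.exp_add, ← Real.exp_add]
    congr 1
    linarith
  linear_combination ((2 * π) ^ (-(n : ℝ) / 2)) ^ 2 * (P.det ^ (-(1 : ℝ) / 2) *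
    R.det ^ (-(1 : ℝ) / 2)) * hexp - ((2 * π) ^ (-(n : ℝ) / 2)) ^ 2 *
    (rexp (-(w ⬝ᵥ (P⁻¹ - η ^ 2 • (P⁻¹ * M⁻¹ * P⁻¹)) *ᵥ w) / 2) *
      rexp (-((v - η • (M⁻¹ * P⁻¹) *ᵥ w) ⬝ᵥ M *ᵥ (v - η • (M⁻¹ * P⁻¹) *ᵥ w)) / 2)) * hdet'

end Algebra

section Measure

variable {n : ℕ}

lemma continuous_gaussDensity (m : Fin n → ℝ) (S : Matrix (Fin n) (Fin n) ℝ) :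
    Continuous (gaussDensity m S) := by
  unfold gaussDensity
  fun_prop

lemma integrable_gaussDensity {S : Matrix (Fin n) (Fin n) ℝ} (hS : S.PosDef) :
    Integrable (gaussDensity 0 S) := by
  obtain ⟨B, hB⟩ : ∃ B : Matrix (Fin n) (Fin n) ℝ, S⁻¹ = star B * B := by
    open scoped MatrixOrder ComplexOrder Matrix.Norms.L2Operator in
    exact CStarAlgebra.nonneg_iff_eq_star_mul_self.mp hS.inv.posSemidef.nonneg
  have hBdet : B.det ≠ 0 := by
    intro h
    have := hS.inv.det_pos
    rw [hB, det_mul, h, mul_zero] at this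
    exact this.false
  have hstd : Integrable (fun x : Fin n → ℝ => ∏ i, rexp (-(1 / 2) * x i ^ 2)) :=
    Integrable.fintype_prod (f := fun _ t => rexp (-(1 / 2) * t ^ 2))
      fun _ => integrable_exp_neg_mul_sq (by norm_num)
  have hmap : Integrable (fun x : Fin n → ℝ => ∏ i, rexp (-(1 / 2) * x i ^ 2))
      (Measure.map (toLin' B) volume) := by
    rw [Real.map_matrix_volume_pi_eq_smul_volume_pi hBdet]
    exact hstd.smul_measure ENNReal.ofReal_ne_top
  have hcomp := hmap.comp_measurable
    (LinearMap.continuous_of_finiteDimensional (toLin' B)).measurable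
  unfold gaussDensity
  refine Integrable.const_mul ?_ _
  refine hcomp.congr (Filter.Eventually.of_forall fun x => ?_)
  simp only [Function.comp_apply, sub_zero, toLin'_apply]
  rw [← Real.exp_sum, hB, ← mulVec_mulVec, dotProduct_mulVec, star_eq_conjTranspose,
    conjTranspose_eq_transpose_of_trivial, vecMul_transpose, dotProduct, neg_div, Finset.sum_div,
    ← Finset.sum_neg_distrib]
  congr 1
  refine Finset.sum_congr rfl fun i _ => by ring

lemma measurePreserving_sgn_mul (b : Fin n → Bool) :
    MeasurePreserving (fun (v : Fin n → ℝ) i => sgn b i * v i) := by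
  refine volume_preserving_pi (f := fun i t => sgn b i * t) fun i => ?_
  unfold sgn
  cases b i
  · simpa using Measure.measurePreserving_neg (volume : Measure ℝ)
  · simpa [Function.id_def] using MeasurePreserving.id (volume : Measure ℝ)

/-- Reflecting every orthant onto the nonnegative one. -/
lemma lintegral_eq_sum_orthant {F : (Fin n → ℝ) → ENNReal} (hF : Measurable F) :
    ∫⁻ x, F x = ∑ b : Fin n → Bool,
      ∫⁻ v in {v : Fin n → ℝ | ∀ i, 0 ≤ v i}, F (fun i => sgn b i * v i) := by
  have hO : MeasurableSet {v : Fin n → ℝ | ∀ i, 0 ≤ v i} := by measurability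
  have hne : ∀ᵐ x : Fin n → ℝ, ∀ i, x i ≠ 0 :=
    ae_all_iff.2 fun i => (Measure.ae_eval_ne (μ := fun _ => volume) i 0)
  have hterm : ∀ b : Fin n → Bool,
      ∫⁻ v in {v : Fin n → ℝ | ∀ i, 0 ≤ v i}, F (fun i => sgn b i * v i) =
      ∫⁻ x, {x : Fin n → ℝ | ∀ i, 0 ≤ sgn b i * x i}.indicator F x := by
    intro b
    have hOb : MeasurableSet {x : Fin n → ℝ | ∀ i, 0 ≤ sgn b i * x i} :=
      (measurePreserving_sgn_mul b).measurable hO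
    rw [← (measurePreserving_sgn_mul b).lintegral_comp (hF.indicator hOb), ← lintegral_indicator hO]
    congr 1
    ext v
    simp only [Set.indicator, Set.mem_ofPred_eq, ← mul_assoc, sgn_mul_self, one_mul]
  simp_rw [hterm]
  rw [← lintegral_finsetSum]
  · refine lintegral_congr_ae ?_
    filter_upwards [hne] with x hx
    rw [Finset.sum_eq_single (fun i => decide (0 ≤ x i))]
    · rw [Set.indicator_of_mem]
      intro i
      by_cases h : 0 ≤ x i <;> simp [sgn, h]
      exact (not_le.1 h).le
    · intro b _ hb
      refine Set.indicator_of_notMem (fun hmem => hb (funext fun i => ?_)) _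
      have h1 := hmem i
      have h2 := hx i
      cases hbi : b i
      · simp only [sgn, hbi] at h1
        simp at h1
        simpa using lt_of_le_of_ne h1 h2
      · simp only [sgn, hbi] at h1
        simp at h1
        simpa using h1
    · simp
  · intro b _
    exact hF.indicator ((measurePreserving_sgn_mul b).measurable hO)

lemma lintegral_orthant_gaussDensity_sub {S : Matrix (Fin n) (Fin n) ℝ} (hS : S.PosDef)
    (c : Fin n → ℝ) :
    ∫⁻ v in {v : Fin n → ℝ | ∀ i, 0 ≤ v i}, ENNReal.ofReal (gaussDensity 0 S (v - c)) =
      ENNReal.ofReal (gaussCdf c S) := by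
  have hO : MeasurableSet {v : Fin n → ℝ | ∀ i, 0 ≤ v i} := by measurability
  have hC : MeasurableSet {v : Fin n → ℝ | ∀ i, v i ≤ c i} := by measurability
  have hmeas : Measurable fun x => ENNReal.ofReal (gaussDensity 0 S x) :=
    (continuous_gaussDensity 0 S).measurable.ennreal_ofReal
  unfold gaussCdf
  rw [withDensity_apply _ hC, ENNReal.ofReal_toReal, ← lintegral_indicator hO,
    ← lintegral_indicator hC,
    ← (Measure.measurePreserving_sub_left (volume : Measure (Fin n → ℝ)) c).lintegral_comp
      (hmeas.indicator hC)]
  · congr 1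
    ext v
    simp only [Set.indicator, Set.mem_ofPred_eq, Pi.sub_apply, sub_le_self_iff,
      gaussDensity_zero_sub_comm S v c]
  · exact ((setLIntegral_le_lintegral _ _).trans_lt
      (integrable_gaussDensity hS).lintegral_lt_top).ne

lemma lintegral_gaussDensity_mul_comp_affine {Ω : Matrix (Fin n) (Fin n) ℝ} (hΩ : Ω.PosDef)
    {ω : ℝ} (hω : 0 < ω) (a : Fin n → ℝ) {f : (Fin n → ℝ) → ENNReal} (hf : Measurable f) :
    ∫⁻ y, ENNReal.ofReal (gaussDensity 0 Ω y) * f (a + ω • y) =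
      ∫⁻ u, ENNReal.ofReal (gaussDensity 0 (ω ^ 2 • Ω) (u - a)) * f u := by
  have hmeas : Measurable fun x => ENNReal.ofReal (gaussDensity 0 (ω ^ 2 • Ω) x) :=
    (continuous_gaussDensity _ _).measurable.ennreal_ofReal
  have hpow : (0 : ℝ) < ω ^ n := by positivity
  have hpoint : ∀ y, ENNReal.ofReal (gaussDensity 0 Ω y) * f (a + ω • y) =
      ENNReal.ofReal (ω ^ n) *
        (ENNReal.ofReal (gaussDensity 0 (ω ^ 2 • Ω) (ω • y)) * f (a + ω • y)) := by
    intro y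
    rw [gaussDensity_smul hω hΩ, ← mul_assoc, ← ENNReal.ofReal_mul hpow.le,
      mul_inv_cancel_left₀ hpow.ne']
  have hg : Measurable fun z => ENNReal.ofReal (gaussDensity 0 (ω ^ 2 • Ω) z) * f (a + z) :=
    hmeas.mul (hf.comp (measurable_const_add a))
  simp_rw [hpoint]
  rw [lintegral_const_mul' _ _ ENNReal.ofReal_ne_top,
    ← lintegral_map (g := fun y : Fin n → ℝ => ω • y) hg (measurable_const_smul ω),
    Measure.map_addHaar_smul volume hω.ne', lintegral_smul_measure, smul_eq_mul, ← mul_assoc,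
    ← ENNReal.ofReal_mul hpow.le, Module.finrank_fin_fun, abs_of_pos (inv_pos.2 hpow),
    mul_inv_cancel₀ hpow.ne', ENNReal.ofReal_one, one_mul,
    ← lintegral_add_left_eq_self (μ := volume) (fun u => _ * f u) a]
  simp

lemma lintegral_gaussDensity_mul_abs {Ω : Matrix (Fin n) (Fin n) ℝ} (hΩ : Ω.PosDef)
    {ω : ℝ} (hω : 0 < ω) (η : ℝ) (w : Fin n → ℝ) :
    ∫⁻ x, ENNReal.ofReal (gaussDensity 0 Ω x) *
        ENNReal.ofReal (gaussDensity 0 (ω ^ 2 • Ω) (w - η • fun i => |x i|)) =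
      ENNReal.ofReal (∑ b : Fin n → Bool,
        gaussDensity 0 (ω ^ 2 • Ω + η ^ 2 • sgnMat b Ω) w *
          gaussCdf (η • (sgnMat b Ω * (ω ^ 2 • Ω + η ^ 2 • sgnMat b Ω)⁻¹).mulVec w)
            (sgnMat b Ω - η ^ 2 •
              (sgnMat b Ω * (ω ^ 2 • Ω + η ^ 2 • sgnMat b Ω)⁻¹ * sgnMat b Ω))) := by
  have hP : (ω ^ 2 • Ω).PosDef := hΩ.smul (by positivity)
  have hA : ∀ b, (ω ^ 2 • Ω + η ^ 2 • sgnMat b Ω).PosDef := fun b =>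
    hP.add_posSemidef ((sgnMat_posDef b hΩ).posSemidef.smul (sq_nonneg η))
  have hO : MeasurableSet {v : Fin n → ℝ | ∀ i, 0 ≤ v i} := by measurability
  rw [lintegral_eq_sum_orthant, ENNReal.ofReal_sum_of_nonneg]
  · refine Finset.sum_congr rfl fun b _ => ?_
    obtain ⟨hM, -, -, hB, -⟩ := condCov_eq_inv (ω ^ 2 • Ω) (sgnMat b Ω) hP (sgnMat_posDef b hΩ) η
    rw [ENNReal.ofReal_mul (gaussDensity_nonneg (hA b) _ _),
      ← lintegral_orthant_gaussDensity_sub (hB ▸ hM.inv),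
      ← lintegral_const_mul' _ _ ENNReal.ofReal_ne_top]
    refine setLIntegral_congr_fun hO fun v hv => ?_
    have habs : (fun i => |sgn b i * v i|) = v := by
      ext i
      rw [abs_mul, abs_of_nonneg (hv i)]
      unfold sgn
      split <;> simp
    simp only [habs]
    rw [gaussDensity_sgn_mul, mul_comm, ← ENNReal.ofReal_mul (gaussDensity_nonneg hP _ _),
      gaussDensity_mul_gaussDensity _ _ hP (sgnMat_posDef b hΩ),
      ENNReal.ofReal_mul (gaussDensity_nonneg (hA b) _ _)]
  · exact fun b _ => mul_nonneg (gaussDensity_nonneg (hA b) _ _) ENNReal.toReal_nonneg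
  · have h1 := continuous_gaussDensity (0 : Fin n → ℝ) Ω
    have h2 := continuous_gaussDensity (0 : Fin n → ℝ) (ω ^ 2 • Ω)
    have h3 : Continuous fun x : Fin n → ℝ =>
      gaussDensity 0 (ω ^ 2 • Ω) (w - η • fun i => |x i|) := h2.comp (by fun_prop)
    exact h1.measurable.ennreal_ofReal.mul h3.measurable.ennreal_ofReal

end Measure

/-- A sum invariant under a global sign flip is twice the sum over classes `{l, -l}`. -/
lemma sum_bool_eq_two_mul {n : ℕ} (i : Fin n) (F : (Fin n → Bool) → ℝ)
    (hF : ∀ b, F (fun j => !b j) = F b) :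
    ∑ b, F b = 2 * ∑ b ∈ Finset.univ.filter (fun b : Fin n → Bool => b i = true), F b := by
  rw [← Finset.sum_filter_add_sum_filter_not Finset.univ (fun b : Fin n → Bool => b i = true) F,
    two_mul]
  congr 1
  refine Finset.sum_nbij' (fun b j => !b j) (fun b j => !b j) ?_ ?_ ?_ ?_ ?_
  all_goals simp [hF]

/-- The law of `α + η |X₁| + ω X₂` has the mixture density obtained by conditioning on `X₁`. -/
lemma map_abs_add_gaussian {n : ℕ} {Ω : Matrix (Fin n) (Fin n) ℝ} (hΩ : Ω.PosDef)
    (α : Fin n → ℝ) (η : ℝ) {ω : ℝ} (hω : 0 < ω) :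
    Measure.map
        (fun p : (Fin n → ℝ) × (Fin n → ℝ) => α + η • (fun i => |p.1 i|) + ω • p.2)
        ((volume.withDensity fun x => ENNReal.ofReal (gaussDensity 0 Ω x)).prod
          (volume.withDensity fun x => ENNReal.ofReal (gaussDensity 0 Ω x))) =
      volume.withDensity (fun u => ∫⁻ x, ENNReal.ofReal (gaussDensity 0 Ω x) *
        ENNReal.ofReal (gaussDensity 0 (ω ^ 2 • Ω) (u - (α + η • fun i => |x i|)))) := by
  set g : (Fin n → ℝ) → ENNReal := fun x => ENNReal.ofReal (gaussDensity 0 Ω x)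
  have hgm : Measurable g := (continuous_gaussDensity 0 Ω).measurable.ennreal_ofReal
  have hψ := continuous_gaussDensity (0 : Fin n → ℝ) (ω ^ 2 • Ω)
  have hT : Measurable fun p : (Fin n → ℝ) × (Fin n → ℝ) =>
      α + η • (fun i => |p.1 i|) + ω • p.2 :=
    Continuous.measurable (by fun_prop)
  have hjoint : Measurable fun q : (Fin n → ℝ) × (Fin n → ℝ) =>
      g q.1 * ENNReal.ofReal
        (gaussDensity 0 (ω ^ 2 • Ω) (q.2 - (α + η • fun i => |q.1 i|))) := by
    have h : Continuous fun q : (Fin n → ℝ) × (Fin n → ℝ) =>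
      gaussDensity 0 (ω ^ 2 • Ω) (q.2 - (α + η • fun i => |q.1 i|)) := hψ.comp (by fun_prop)
    exact (hgm.comp measurable_fst).mul h.measurable.ennreal_ofReal
  refine Measure.ext_of_lintegral _ fun f hf => ?_
  rw [lintegral_map hf hT, prod_withDensity hgm hgm,
    lintegral_withDensity_eq_lintegral_mul _ (by fun_prop)
      (show Measurable fun p : (Fin n → ℝ) × (Fin n → ℝ) =>
        f (α + η • (fun i => |p.1 i|) + ω • p.2) from hf.comp hT),
    lintegral_withDensity_eq_lintegral_mul _
      (Measurable.lintegral_prod_left' (μ := volume) hjoint) hf,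
    lintegral_prod _ (by fun_prop)]
  simp only [Pi.mul_apply]
  calc ∫⁻ x, ∫⁻ y, g x * g y * f (α + η • (fun i => |x i|) + ω • y)
      = ∫⁻ x, ∫⁻ u, g x * ENNReal.ofReal
          (gaussDensity 0 (ω ^ 2 • Ω) (u - (α + η • fun i => |x i|))) * f u := by
        refine lintegral_congr fun x => ?_
        simp_rw [mul_assoc]
        rw [lintegral_const_mul' _ _ ENNReal.ofReal_ne_top,
          lintegral_const_mul' _ _ ENNReal.ofReal_ne_top,
          lintegral_gaussDensity_mul_comp_affine hΩ hω _ hf]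
    _ = ∫⁻ u, ∫⁻ x, g x * ENNReal.ofReal
          (gaussDensity 0 (ω ^ 2 • Ω) (u - (α + η • fun i => |x i|))) * f u :=
        lintegral_lintegral_swap (hjoint.mul (hf.comp measurable_snd)).aemeasurable
    _ = _ := by
        refine lintegral_congr fun u => ?_
        have hu : Measurable fun x => g x * ENNReal.ofReal
            (gaussDensity 0 (ω ^ 2 • Ω) (u - (α + η • fun i => |x i|))) :=
          hjoint.of_uncurry_right (f := fun x u => g x * ENNReal.ofReal
            (gaussDensity 0 (ω ^ 2 • Ω) (u - (α + η • fun i => |x i|))))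
        rw [lintegral_mul_const _ hu]

/-- The finite dimensional density of the skew-Gaussian process
`U = α + η|X₁| + ω X₂` with `X₁, X₂` independent `N_n(0,Ω)`:
`f_U(u) = 2 Σ_{l : l₁ = +1} φ_n(u - α; A_l) Φ_n(c_l; 0, B_l)` where
`A_l = ω²Ω + η²Ω_l`, `c_l = ηΩ_l A_l⁻¹(u-α)`, `B_l = Ω_l - η²Ω_l A_l⁻¹ Ω_l`. -/
theorem stmt15 (n : ℕ) (hn : 0 < n) (Ω : Matrix (Fin n) (Fin n) ℝ) (hΩ : Ω.PosDef)
    (α : Fin n → ℝ) (η ω : ℝ) (hω : 0 < ω) :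
    Measure.map
        (fun p : (Fin n → ℝ) × (Fin n → ℝ) =>
          α + η • (fun i => |p.1 i|) + ω • p.2)
        ((volume.withDensity fun x => ENNReal.ofReal (gaussDensity 0 Ω x)).prod
          (volume.withDensity fun x => ENNReal.ofReal (gaussDensity 0 Ω x)))
      = volume.withDensity (fun u => ENNReal.ofReal
          (2 * ∑ b ∈ Finset.univ.filter (fun b : Fin n → Bool => b ⟨0, hn⟩ = true),
            gaussDensity 0 (ω^2 • Ω + η^2 • sgnMat b Ω) (u - α) *
              gaussCdf
                (η • (sgnMat b Ω * (ω^2 • Ω + η^2 • sgnMat b Ω)⁻¹).mulVec (u - α))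
                (sgnMat b Ω - η^2 •
                  (sgnMat b Ω * (ω^2 • Ω + η^2 • sgnMat b Ω)⁻¹ * sgnMat b Ω)))) := by
  rw [map_abs_add_gaussian hΩ α η hω]
  congr 1
  funext u
  simp_rw [← sub_sub]
  rw [lintegral_gaussDensity_mul_abs hΩ hω, sum_bool_eq_two_mul ⟨0, hn⟩]
  intro b
  simp only [sgnMat_not]
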